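/- Every quasi-isomorphism between minimal Sullivan algebras over a field of characteristic 0 is an isomorphism of DGCAs. -/

import Mathlib

/-!
A quasi-isomorphism `f : A → B` of minimal Sullivan algebras is shown to be bijective on an
exhaustive family of differential subalgebras that is defined without reference to generators.

Let `A_n` be the subalgebra generated by the elements of degree less than `n`. Starting from
`A_n`, repeatedly pass from a differential subalgebra `S` to the subalgebra generated by `A_n` and
by all `a` of degree `n` with `d a ∈ S` (`DGCA.next`, `DGCA.tower`). Minimality makes `A_n` stable
under `d`, because a decomposable element of degree `n` is a polynomial in elements of lower
degree. Minimality and the Sullivan filtration together show that the union of these subalgebras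
is `A_{n+1}` (`IsMinimalSullivan.exists_mem_tower`): for a generator `v` of degree `n`, the element
`d v` is fixed by the endomorphism that kills all generators of degree above `n`, so `d v` involves
only generators of degree at most `n` in the previous step of the filtration.

The inductive step (`DGCAHom.BijOn.next`) says that if `f` restricts to a bijection `S → T` of
such subalgebras of `A` and `B`, then it does so on the next ones. A five lemma argument shows that
`f` maps `{a ∈ Aⁿ | d a ∈ S}` bijectively to `{b ∈ Bⁿ | d b ∈ T}`. Surjectivity on the generated
subalgebras follows. For injectivity, freeness of `B` turns linear sections of `f` on generators
into an algebra map `g : B → A` with `f ∘ g = id` on the next subalgebra of `B`; the injectivity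
already known forces `g ∘ f = id` on the generators of the next subalgebra of `A`, hence on all
of it.
-/

/-!
Core definitions: differential graded commutative algebras (DGCAs) over a field `k`,
with internal ℕ-grading given by submodules whose (internal) direct sum is the whole
algebra, graded commutativity, homomorphisms, quasi-isomorphisms, semifree/Sullivan/minimal
algebras.
-/

/-- A (ℕ-)graded commutative algebra over a field `k`: an associative unital `k`-algebra
together with a grading by `k`-submodules (`A = ⊕ₙ Aⁿ`, expressed by the direct sum
conditions `disjoint` and `sup_top`), such that multiplication respects the grading and
is graded commutative. -/
structure GCA (k : Type) [Field k] : Type 1 where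
  carrier : Type
  [ringStr : Ring carrier]
  [algebraStr : Algebra k carrier]
  grading : ℕ → Submodule k carrier
  one_mem : (1 : carrier) ∈ grading 0
  mul_mem : ∀ {m n : ℕ} {a b : carrier},
    a ∈ grading m → b ∈ grading n → a * b ∈ grading (m + n)
  disjoint : ∀ n : ℕ, grading n ⊓ (⨆ m, ⨆ _ : m ≠ n, grading m) = ⊥
  sup_top : (⨆ n, grading n) = ⊤
  graded_comm : ∀ {m n : ℕ} {a b : carrier}, a ∈ grading m → b ∈ grading n →
    b * a = ((-1 : k) ^ (m * n)) • (a * b)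

attribute [instance] GCA.ringStr GCA.algebraStr

/-- A differential graded commutative algebra (DGCA) over a field `k`: a graded
commutative algebra with a `k`-linear differential of degree `+1` squaring to zero and
satisfying the graded Leibniz rule. -/
structure DGCA (k : Type) [Field k] extends GCA k where
  d : carrier →ₗ[k] carrier
  d_mem : ∀ {n : ℕ} {a : carrier}, a ∈ grading n → d a ∈ grading (n + 1)
  d_squared : ∀ a : carrier, d (d a) = 0
  leibniz : ∀ {m : ℕ} {a : carrier}, a ∈ grading m → ∀ b : carrier,
    d (a * b) = d a * b + ((-1 : k) ^ m) • (a * d b)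

namespace DGCA

variable {k : Type} [Field k]

/-- Degree `n` cocycles of a DGCA. -/
def cocycles (A : DGCA k) (n : ℕ) : Submodule k A.carrier :=
  A.grading n ⊓ LinearMap.ker A.d

/-- Degree `n` coboundaries of a DGCA. -/
def coboundaries (A : DGCA k) (n : ℕ) : Submodule k A.carrier :=
  A.grading n ⊓ LinearMap.range A.d

/-- The positive-degree part `A⁺` of a DGCA. -/
def plus (A : DGCA k) : Submodule k A.carrier :=
  ⨆ n, ⨆ _ : 0 < n, A.grading n

/-- `H⁰(A) = k`: homological connectedness of a DGCA. -/
def HomologicallyConnected (A : DGCA k) : Prop :=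
  (∀ a ∈ A.cocycles 0, ∃ c : k, a - c • (1 : A.carrier) ∈ A.coboundaries 0) ∧
  (∀ c : k, (c • (1 : A.carrier)) ∈ A.coboundaries 0 → c = 0)

end DGCA

/-- A homomorphism of DGCAs: a unital `k`-algebra map preserving the grading and the
differential. -/
structure DGCAHom {k : Type} [Field k] (A B : DGCA k) where
  hom : A.carrier →ₐ[k] B.carrier
  map_grading : ∀ (n : ℕ) (a : A.carrier), a ∈ A.grading n → hom a ∈ B.grading n
  map_d : ∀ a : A.carrier, hom (A.d a) = B.d (hom a)

/-- A DGCA homomorphism is a quasi-isomorphism if it induces an isomorphism on the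
cohomology of the differentials, expressed degreewise by injectivity and surjectivity
of the induced map on cohomology classes. -/
def DGCAHom.IsQuasiIso {k : Type} [Field k] {A B : DGCA k} (f : DGCAHom A B) : Prop :=
  ∀ n : ℕ,
    (∀ a ∈ A.cocycles n, f.hom a ∈ B.coboundaries n → a ∈ A.coboundaries n) ∧
    (∀ b ∈ B.cocycles n, ∃ a ∈ A.cocycles n, b - f.hom a ∈ B.coboundaries n)

/-- A DGCA homomorphism is an isomorphism of DGCAs iff it is bijective (the inverse is
then automatically a DGCA homomorphism). -/
def DGCAHom.IsIso {k : Type} [Field k] {A B : DGCA k} (f : DGCAHom A B) : Prop :=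
  Function.Bijective f.hom

/-- Two DGCAs are isomorphic if there is a bijective DGCA homomorphism between them. -/
def DGCAIsIso {k : Type} [Field k] (A B : DGCA k) : Prop :=
  ∃ f : DGCAHom A B, f.IsIso

/-- `(A, V)` is semifree: the underlying graded algebra of `A` is free graded commutative
on the positively graded subspace `V = ⊕ₙ Vⁿ` (freeness is expressed by the universal
property of the free graded commutative algebra `S(V)` against all graded commutative
algebras). -/
def IsSemifree {k : Type} [Field k] (A : DGCA k) (V : ℕ → Submodule k A.carrier) : Prop :=
  V 0 = ⊥ ∧ (∀ n, V n ≤ A.grading n) ∧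
  ∀ (B : GCA k) (φ : ∀ n : ℕ, (V n) →ₗ[k] B.carrier),
    (∀ (n : ℕ) (v : V n), φ n v ∈ B.grading n) →
    ∃! g : A.carrier →ₐ[k] B.carrier, ∀ (n : ℕ) (v : V n), g v = φ n v

/-- The Sullivan (nilpotency) condition on a semifree DGCA `(A, V)`: there is an
exhaustive increasing filtration `V(0) = 0 ⊆ V(1) ⊆ ⋯` of `V` by graded subspaces with
`d(V(m+1)) ⊆ S(V(m))`, the subalgebra generated by `V(m)`. -/
def IsSullivan {k : Type} [Field k] (A : DGCA k) (V : ℕ → Submodule k A.carrier) : Prop :=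
  ∃ F : ℕ → ℕ → Submodule k A.carrier,
    (∀ n, F 0 n = ⊥) ∧
    (∀ m n, F m n ≤ F (m + 1) n) ∧
    (∀ m n, F m n ≤ V n) ∧
    (∀ n, (⨆ m, F m n) = V n) ∧
    (∀ m n, ∀ v ∈ F (m + 1) n,
      A.d v ∈ Algebra.adjoin k (⋃ i, (F m i : Set A.carrier)))

/-- Minimality of a semifree DGCA `(A, V)`: `d(V) ⊆ S^{≥2}(V) = A⁺ · A⁺`. -/
def IsMinimal {k : Type} [Field k] (A : DGCA k) (V : ℕ → Submodule k A.carrier) : Prop :=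
  ∀ n : ℕ, ∀ v ∈ V n, A.d v ∈ A.plus * A.plus

/-- A minimal Sullivan algebra. -/
def IsMinimalSullivan {k : Type} [Field k] (A : DGCA k)
    (V : ℕ → Submodule k A.carrier) : Prop :=
  IsSemifree A V ∧ IsSullivan A V ∧ IsMinimal A V

/-! ### Homogeneous components and generated subalgebras -/

namespace GCA

variable {k : Type} [Field k] (G : GCA k)

theorem isCompl_grading (n : ℕ) :
    IsCompl (G.grading n) (⨆ m, ⨆ _ : m ≠ n, G.grading m) := by
  refine ⟨disjoint_iff.2 (G.disjoint n), codisjoint_iff.2 (eq_top_iff.2 ?_)⟩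
  rw [← G.sup_top]
  refine iSup_le fun m => ?_
  by_cases h : m = n
  · subst h; exact le_sup_left
  · exact le_sup_of_le_right (le_iSup₂_of_le m h le_rfl)

/-- The projection of a graded algebra onto its degree `n` component. -/
noncomputable def proj (n : ℕ) : G.carrier →ₗ[k] G.carrier :=
  (G.grading n).projection _ (G.isCompl_grading n)

theorem proj_mem (n : ℕ) (x : G.carrier) : G.proj n x ∈ G.grading n :=
  Submodule.projection_apply_mem _ x

theorem proj_same {n : ℕ} {x : G.carrier} (hx : x ∈ G.grading n) : G.proj n x = x :=
  Submodule.projection_apply_of_mem_left _ hx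

theorem proj_ne {m n : ℕ} (h : m ≠ n) {x : G.carrier} (hx : x ∈ G.grading m) :
    G.proj n x = 0 := by
  rw [proj, Submodule.projection_apply_eq_zero_iff]
  exact Submodule.mem_iSup_of_mem m (Submodule.mem_iSup_of_mem h hx)

/-- A property of homogeneous elements that is stable under addition holds everywhere. -/
theorem homogeneous_induction {p : G.carrier → Prop} (x : G.carrier)
    (hom : ∀ n, ∀ a ∈ G.grading n, p a) (add : ∀ a b, p a → p b → p (a + b)) : p x := by
  have hx : x ∈ ⨆ n, G.grading n := G.sup_top ▸ Submodule.mem_top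
  exact Submodule.iSup_induction G.grading (motive := p) hx hom (hom 0 0 (zero_mem _)) add

/-- A submodule containing all homogeneous components of `x` contains `x`. -/
theorem mem_of_proj_mem (p : Submodule k G.carrier) (x : G.carrier)
    (h : ∀ n, G.proj n x ∈ p) : x ∈ p := by
  obtain ⟨N, hN⟩ : ∃ N, ∀ M ≥ N, x = ∑ n ∈ Finset.range M, G.proj n x := by
    refine G.homogeneous_induction
      (p := fun x => ∃ N, ∀ M ≥ N, x = ∑ n ∈ Finset.range M, G.proj n x) x ?_ ?_
    · intro n a ha
      refine ⟨n + 1, fun M hM => ?_⟩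
      rw [Finset.sum_eq_single n, G.proj_same ha]
      · intro m _ hm
        exact G.proj_ne (Ne.symm hm) ha
      · intro h
        exact absurd (Finset.mem_range.2 (by omega)) h
    · rintro a b ⟨N, hN⟩ ⟨N', hN'⟩
      refine ⟨max N N', fun M hM => ?_⟩
      simp only [map_add, Finset.sum_add_distrib]
      rw [← hN M (le_trans (le_max_left _ _) hM), ← hN' M (le_trans (le_max_right _ _) hM)]
  rw [hN N le_rfl]
  exact Submodule.sum_mem _ fun n _ => h n

theorem proj_mul_add {i : ℕ} {s : G.carrier} (hs : s ∈ G.grading i) (j : ℕ) (y : G.carrier) :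
    G.proj (i + j) (s * y) = s * G.proj j y := by
  refine G.homogeneous_induction
    (p := fun y => G.proj (i + j) (s * y) = s * G.proj j y) y ?_ ?_
  · intro n a ha
    by_cases h : n = j
    · subst h
      rw [G.proj_same ha, G.proj_same (G.mul_mem hs ha)]
    · rw [G.proj_ne h ha, G.proj_ne (by omega) (G.mul_mem hs ha), mul_zero]
  · intro a b ha hb
    simp only [mul_add, map_add, ha, hb]

theorem proj_mul_lt {i : ℕ} {s : G.carrier} (hs : s ∈ G.grading i) {n : ℕ} (hn : n < i)
    (y : G.carrier) : G.proj n (s * y) = 0 := by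
  refine G.homogeneous_induction (p := fun y => G.proj n (s * y) = 0) y ?_ ?_
  · intro m a ha
    exact G.proj_ne (by omega) (G.mul_mem hs ha)
  · intro a b ha hb
    simp only [mul_add, map_add, ha, hb, add_zero]

/-- The elements that are homogeneous of degree less than `n`. -/
def low (n : ℕ) : Set G.carrier := {a | ∃ i < n, a ∈ G.grading i}

end GCA

/-- To show that the subalgebra generated by `s` lies in a submodule `p`, it suffices that `p`
contains `1` and is stable under left multiplication by elements of `s`. -/
theorem adjoin_le_of_mul_left {k : Type} [Field k] {R : Type} [Ring R] [Algebra k R]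
    {s : Set R} (p : Submodule k R) (one : 1 ∈ p) (mul : ∀ a ∈ s, ∀ y ∈ p, a * y ∈ p)
    {x : R} (hx : x ∈ Algebra.adjoin k s) : x ∈ p := by
  rw [← Subalgebra.mem_toSubmodule, Algebra.adjoin_eq_span] at hx
  refine Submodule.span_le.2 ?_ hx
  intro y hy
  exact Submonoid.closure_induction_left (motive := fun y _ => y ∈ p) one
    (fun a ha y _ hy => mul a ha y hy) hy

namespace GCA

variable {k : Type} [Field k] (G : GCA k)

/-- A subalgebra generated by homogeneous elements is homogeneous. -/
theorem proj_mem_adjoin {s : Set G.carrier} (hs : ∀ a ∈ s, ∃ i, a ∈ G.grading i)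
    {x : G.carrier} (hx : x ∈ Algebra.adjoin k s) (n : ℕ) :
    G.proj n x ∈ Algebra.adjoin k s := by
  have key : x ∈ ⨅ n, (Subalgebra.toSubmodule (Algebra.adjoin k s)).comap (G.proj n) := by
    refine adjoin_le_of_mul_left _ ?_ ?_ hx
    · simp only [Submodule.mem_iInf, Submodule.mem_comap, Subalgebra.mem_toSubmodule]
      intro n
      by_cases h : 0 = n
      · subst h; rw [G.proj_same G.one_mem]; exact Subalgebra.one_mem _
      · rw [G.proj_ne h G.one_mem]; exact zero_mem _
    · simp only [Submodule.mem_iInf, Submodule.mem_comap, Subalgebra.mem_toSubmodule]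
      intro a ha y hy n
      obtain ⟨i, hi⟩ := hs a ha
      by_cases h : n < i
      · rw [G.proj_mul_lt hi h]; exact zero_mem _
      · obtain ⟨j, rfl⟩ := Nat.exists_eq_add_of_le (not_lt.1 h)
        rw [G.proj_mul_add hi]
        exact Subalgebra.mul_mem _ (Algebra.subset_adjoin ha) (hy j)
  simp only [Submodule.mem_iInf, Submodule.mem_comap, Subalgebra.mem_toSubmodule] at key
  exact key n

/-- The subalgebra generated by a set of homogeneous elements, with the induced grading. -/
def adjoinGCA (s : Set G.carrier) (hs : ∀ a ∈ s, ∃ i, a ∈ G.grading i) : GCA k where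
  carrier := Algebra.adjoin k s
  grading n := (G.grading n).comap (Algebra.adjoin k s).val.toLinearMap
  one_mem := G.one_mem
  mul_mem ha hb := G.mul_mem ha hb
  disjoint n := by
    rw [← disjoint_iff, Submodule.disjoint_def]
    intro x hx hx'
    have h : (⨆ m, ⨆ _ : m ≠ n, (G.grading m).comap (Algebra.adjoin k s).val.toLinearMap) ≤
        (⨆ m, ⨆ _ : m ≠ n, G.grading m).comap (Algebra.adjoin k s).val.toLinearMap :=
      iSup₂_le fun m hm => Submodule.comap_mono (le_iSup₂_of_le m hm le_rfl)
    exact Subtype.ext (Submodule.disjoint_def.1 (G.isCompl_grading n).1 _ hx (h hx'))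
  sup_top := by
    rw [eq_top_iff]
    rintro ⟨x, hx⟩ -
    set T := ⨆ n, (G.grading n).comap (Algebra.adjoin k s).val.toLinearMap with hT
    have key : x ∈ T.map (Algebra.adjoin k s).val.toLinearMap := by
      refine G.mem_of_proj_mem _ x fun n => ?_
      refine ⟨⟨G.proj n x, G.proj_mem_adjoin hs hx n⟩, ?_, rfl⟩
      exact Submodule.mem_iSup_of_mem n (G.proj_mem n x)
    obtain ⟨y, hy, hyx⟩ := key
    have : y = ⟨x, hx⟩ := Subtype.ext hyx
    exact this ▸ hy
  graded_comm ha hb := Subtype.ext (G.graded_comm ha hb)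

end GCA

/-! ### Generators of semifree algebras -/

section Semifree

variable {k : Type} [Field k] {A : DGCA k} {V : ℕ → Submodule k A.carrier}

/-- A semifree algebra is generated by `V`. Uniqueness in the universal property forces the
retraction onto the subalgebra generated by `V` to be the identity. -/
theorem IsSemifree.adjoin_eq_top (h : IsSemifree A V) :
    Algebra.adjoin k (⋃ i, (V i : Set A.carrier)) = ⊤ := by
  obtain ⟨-, hV, hU⟩ := h
  set s : Set A.carrier := ⋃ i, (V i : Set A.carrier) with hsdef
  have hs : ∀ a ∈ s, ∃ i, a ∈ A.grading i := by
    intro a ha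
    obtain ⟨i, hi⟩ := Set.mem_iUnion.1 ha
    exact ⟨i, hV i hi⟩
  have hsub : ∀ i, V i ≤ Subalgebra.toSubmodule (Algebra.adjoin k s) := fun i v hv =>
    Algebra.subset_adjoin (Set.mem_iUnion.2 ⟨i, hv⟩)
  obtain ⟨g, hg, -⟩ := hU (A.toGCA.adjoinGCA s hs) (fun n => Submodule.inclusion (hsub n))
    (fun n v => hV n v.2)
  have huniq := (hU A.toGCA (fun n => (V n).subtype) (fun n v => hV n v.2)).unique
    (y₁ := (Algebra.adjoin k s).val.comp g) (y₂ := AlgHom.id k A.carrier)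
    (fun n v => congrArg Subtype.val (hg n v)) (fun n v => rfl)
  refine eq_top_iff.2 fun x _ => ?_
  have hx : (Algebra.adjoin k s).val (g x) = x := DFunLike.congr_fun huniq x
  rw [← hx]
  exact Subtype.property _

theorem IsSemifree.homogeneous_low (h : IsSemifree A V) (n : ℕ) :
    ∀ a ∈ {v | ∃ i < n, v ∈ V i}, ∃ i, a ∈ A.grading i := by
  rintro a ⟨i, -, hi⟩
  exact ⟨i, h.2.1 i hi⟩

/-- In degree `n`, a semifree algebra consists of generators and of polynomials in generators of
lower degree. -/
theorem IsSemifree.grading_le (h : IsSemifree A V) (n : ℕ) :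
    A.grading n ≤ V n ⊔ Subalgebra.toSubmodule (Algebra.adjoin k {v | ∃ i < n, v ∈ V i}) := by
  set T : ℕ → Submodule k A.carrier := fun n =>
    V n ⊔ Subalgebra.toSubmodule (Algebra.adjoin k {v | ∃ i < n, v ∈ V i}) with hT
  have hmono : ∀ {i n}, i < n → T i ≤
      Subalgebra.toSubmodule (Algebra.adjoin k {v | ∃ i < n, v ∈ V i}) := by
    intro i n hin
    refine sup_le (fun v hv => Algebra.subset_adjoin ⟨i, hin, hv⟩) ?_
    exact Algebra.adjoin_mono fun v ⟨j, hj, hv⟩ => ⟨j, by omega, hv⟩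
  have key : ∀ x : A.carrier, x ∈ ⨅ n, (T n).comap (A.proj n) := by
    intro x
    have hx : x ∈ Algebra.adjoin k (⋃ i, (V i : Set A.carrier)) :=
      h.adjoin_eq_top ▸ Algebra.mem_top
    refine adjoin_le_of_mul_left _ ?_ ?_ hx
    · simp only [Submodule.mem_iInf, Submodule.mem_comap]
      intro n
      refine Submodule.mem_sup_right ?_
      by_cases hn : 0 = n
      · subst hn; rw [A.proj_same A.one_mem]; exact Subalgebra.one_mem _
      · rw [A.proj_ne hn A.one_mem]; exact zero_mem _
    · simp only [Submodule.mem_iInf, Submodule.mem_comap]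
      intro a ha y hy n
      obtain ⟨i, hi⟩ := Set.mem_iUnion.1 ha
      by_cases hn : n < i
      · rw [A.proj_mul_lt (h.2.1 i hi) hn]; exact zero_mem _
      obtain ⟨j, rfl⟩ := Nat.exists_eq_add_of_le (not_lt.1 hn)
      rw [A.proj_mul_add (h.2.1 i hi)]
      rcases Nat.eq_zero_or_pos i with rfl | hipos
      · have : a = 0 := by simpa [h.1] using hi
        simp [this]
      rcases Nat.eq_zero_or_pos j with rfl | hjpos
      · -- degree `0` consists of scalars, so the product is a multiple of a generator
        have h0 := hy 0
        have hempty : {v | ∃ i < 0, v ∈ V i} = (∅ : Set A.carrier) := by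
          ext v; simp
        simp only [hT, h.1, bot_sup_eq, hempty, Algebra.adjoin_empty,
          Subalgebra.mem_toSubmodule, Algebra.mem_bot] at h0
        obtain ⟨c, hc⟩ := h0
        refine Submodule.mem_sup_left ?_
        rw [← hc, ← Algebra.commutes, ← Algebra.smul_def]
        exact (V i).smul_mem c hi
      · refine Submodule.mem_sup_right ?_
        exact Subalgebra.mul_mem _ (Algebra.subset_adjoin ⟨i, by omega, hi⟩)
          (hmono (show j < i + j by omega) (hy j))
  intro x hx
  have := key x
  simp only [Submodule.mem_iInf, Submodule.mem_comap] at this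
  simpa [A.proj_same hx] using this n

theorem IsSemifree.adjoin_low (h : IsSemifree A V) (n : ℕ) :
    Algebra.adjoin k (A.low n) = Algebra.adjoin k {v | ∃ i < n, v ∈ V i} := by
  apply le_antisymm
  · refine Algebra.adjoin_le ?_
    rintro a ⟨i, hin, ha⟩
    obtain ⟨v, hv, z, hz, rfl⟩ := Submodule.mem_sup.1 (h.grading_le i ha)
    refine add_mem (Algebra.subset_adjoin ⟨i, hin, hv⟩) ?_
    exact Algebra.adjoin_mono (s := {v | ∃ j < i, v ∈ V j})
      (t := {v | ∃ j < n, v ∈ V j})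
      (fun v ⟨j, hj, hv⟩ => ⟨j, by omega, hv⟩) hz
  · exact Algebra.adjoin_mono fun v ⟨i, hi, hv⟩ => ⟨i, hi, h.2.1 i hv⟩

/-- Decomposable elements of degree `n` are polynomials in elements of lower degree. -/
theorem DGCA.proj_plus_mul_plus (A : DGCA k) {x : A.carrier} (hx : x ∈ A.plus * A.plus) (n : ℕ) :
    A.proj n x ∈ Algebra.adjoin k (A.low n) := by
  have key : A.plus * A.plus ≤
      (Subalgebra.toSubmodule (Algebra.adjoin k (A.low n))).comap (A.proj n) := by
    simp only [DGCA.plus, Submodule.iSup_mul, Submodule.mul_iSup]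
    refine iSup_le fun j => iSup_le fun hj => iSup_le fun i => iSup_le fun hi => ?_
    rw [Submodule.mul_le]
    intro a ha b hb
    by_cases h : i + j = n
    · rw [Submodule.mem_comap, A.proj_same (h ▸ A.mul_mem ha hb)]
      exact Subalgebra.mul_mem _ (Algebra.subset_adjoin ⟨i, by omega, ha⟩)
        (Algebra.subset_adjoin ⟨j, by omega, hb⟩)
    · rw [Submodule.mem_comap, A.proj_ne h (A.mul_mem ha hb)]
      exact zero_mem _
  exact key hx

theorem DGCA.mem_adjoin_low (A : DGCA k) {n : ℕ} {x : A.carrier} (hx : x ∈ A.plus * A.plus)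
    (hn : x ∈ A.grading n) : x ∈ Algebra.adjoin k (A.low n) := by
  simpa [A.proj_same hn] using A.proj_plus_mul_plus hx n

theorem DGCA.d_one (A : DGCA k) : A.d 1 = 0 := by
  simpa using A.leibniz A.one_mem 1

/-- If `d` maps a set of homogeneous generators into the subalgebra they generate, then this
subalgebra is stable under `d`. -/
theorem DGCA.d_mem_adjoin (A : DGCA k) {s : Set A.carrier}
    (hs : ∀ a ∈ s, ∃ i, a ∈ A.grading i) (hd : ∀ a ∈ s, A.d a ∈ Algebra.adjoin k s)
    {x : A.carrier} (hx : x ∈ Algebra.adjoin k s) : A.d x ∈ Algebra.adjoin k s := by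
  set p := Subalgebra.toSubmodule (Algebra.adjoin k s)
  have key : x ∈ p ⊓ p.comap A.d := by
    refine adjoin_le_of_mul_left _
      (Submodule.mem_inf.2 ⟨(Algebra.adjoin k s).one_mem, ?_⟩) ?_ hx
    · rw [Submodule.mem_comap, A.d_one]; exact zero_mem _
    · rintro a ha y ⟨hy, hdy⟩
      obtain ⟨i, hi⟩ := hs a ha
      have haS : a ∈ Algebra.adjoin k s := Algebra.subset_adjoin ha
      refine ⟨Subalgebra.mul_mem _ haS hy, ?_⟩
      simp only [SetLike.mem_coe, Submodule.mem_comap, A.leibniz hi]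
      exact p.add_mem (Subalgebra.mul_mem _ (hd a ha) hy)
        (p.smul_mem _ (Subalgebra.mul_mem _ haS hdy))
  exact key.2

theorem DGCA.proj_d (A : DGCA k) (n : ℕ) (x : A.carrier) :
    A.proj (n + 1) (A.d x) = A.d (A.proj n x) := by
  refine A.homogeneous_induction (p := fun x => A.proj (n + 1) (A.d x) = A.d (A.proj n x)) x ?_ ?_
  · intro m a ha
    by_cases h : m = n
    · subst h; rw [A.proj_same ha, A.proj_same (A.d_mem ha)]
    · rw [A.proj_ne h ha, A.proj_ne (by omega) (A.d_mem ha), map_zero]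
  · intro a b ha hb
    simp only [map_add, ha, hb]

/-- A coboundary of degree `n` is the differential of an element that is zero or homogeneous of
degree `n - 1`; for `n = 0` only the first case occurs. -/
theorem DGCA.exists_of_mem_coboundaries (A : DGCA k) {n : ℕ} {a : A.carrier}
    (ha : a ∈ A.coboundaries n) : ∃ c, A.d c = a ∧ (c = 0 ∨ ∃ i, i + 1 = n ∧ c ∈ A.grading i) := by
  obtain ⟨hn, c, rfl⟩ := ha
  cases n with
  | zero =>
    refine ⟨0, ?_, Or.inl rfl⟩
    rw [map_zero, ← A.proj_same hn]
    refine A.homogeneous_induction (p := fun c => 0 = A.proj 0 (A.d c)) c ?_ ?_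
    · intro m a ha
      rw [A.proj_ne (by omega) (A.d_mem ha)]
    · intro a b ha hb
      simp only [map_add, ← ha, ← hb, add_zero]
  | succ i =>
    exact ⟨A.proj i c, by rw [← A.proj_d, A.proj_same hn], Or.inr ⟨i, rfl, A.proj_mem i c⟩⟩

theorem DGCAHom.hom_proj {B : DGCA k} (f : DGCAHom A B) (n : ℕ) (x : A.carrier) :
    f.hom (A.proj n x) = B.proj n (f.hom x) := by
  refine A.homogeneous_induction (p := fun x => f.hom (A.proj n x) = B.proj n (f.hom x)) x ?_ ?_
  · intro m a ha
    by_cases h : m = n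
    · subst h; rw [A.proj_same ha, B.proj_same (f.map_grading _ _ ha)]
    · rw [A.proj_ne h ha, B.proj_ne h (f.map_grading _ _ ha), map_zero]
  · intro a b ha hb
    simp only [map_add, ha, hb]

end Semifree

/-! ### Extending a subalgebra by the elements with differential in it -/

section Stage

variable {k : Type} [Field k] {A B : DGCA k}

/-- The subalgebra generated by the elements of degree less than `n` together with a subspace
`N`, which is meant to consist of elements of degree `n`. -/
def DGCA.stage (A : DGCA k) (n : ℕ) (N : Submodule k A.carrier) : Subalgebra k A.carrier :=
  Algebra.adjoin k (A.low n ∪ N)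

/-- The elements of degree `n` whose differential lies in `A.stage n N`. -/
def DGCA.next (A : DGCA k) (n : ℕ) (N : Submodule k A.carrier) : Submodule k A.carrier :=
  A.grading n ⊓ (Subalgebra.toSubmodule (A.stage n N)).comap A.d

/-- The subspace `N` consists of elements of degree `n`, contains all polynomials of degree `n`
in elements of lower degree, and generates together with those a differential subalgebra. -/
structure DGCA.IsStage (A : DGCA k) (n : ℕ) (N : Submodule k A.carrier) : Prop where
  low_le : ∀ x ∈ Algebra.adjoin k (A.low n), x ∈ A.grading n → x ∈ N
  le : N ≤ A.grading n
  d_mem : ∀ x ∈ A.stage n N, A.d x ∈ A.stage n N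

theorem DGCA.mem_next {n : ℕ} {N : Submodule k A.carrier} {x : A.carrier} :
    x ∈ A.next n N ↔ x ∈ A.grading n ∧ A.d x ∈ A.stage n N := Iff.rfl

theorem DGCA.low_subset_stage (n : ℕ) (N : Submodule k A.carrier) {x : A.carrier}
    {i : ℕ} (hi : i < n) (hx : x ∈ A.grading i) : x ∈ A.stage n N :=
  Algebra.subset_adjoin (Or.inl ⟨i, hi, hx⟩)

theorem DGCA.le_stage (n : ℕ) (N : Submodule k A.carrier) {x : A.carrier} (hx : x ∈ N) :
    x ∈ A.stage n N :=
  Algebra.subset_adjoin (Or.inr hx)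

theorem DGCA.stage_mono {n : ℕ} {N N' : Submodule k A.carrier} (h : N ≤ N') :
    A.stage n N ≤ A.stage n N' :=
  Algebra.adjoin_mono (Set.union_subset_union_right _ h)

theorem DGCA.homogeneous_stage {n : ℕ} {N : Submodule k A.carrier} (h : N ≤ A.grading n) :
    ∀ a ∈ A.low n ∪ N, ∃ i, a ∈ A.grading i := by
  rintro a (⟨i, -, ha⟩ | ha)
  · exact ⟨i, ha⟩
  · exact ⟨n, h ha⟩

namespace DGCA.IsStage

variable {n : ℕ} {N : Submodule k A.carrier}

theorem mem_next_of_mem_stage (h : A.IsStage n N) {x : A.carrier} (hx : x ∈ A.stage n N)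
    (hn : x ∈ A.grading n) : x ∈ A.next n N :=
  ⟨hn, h.d_mem x hx⟩

theorem le_next (h : A.IsStage n N) : N ≤ A.next n N := fun _ hx =>
  h.mem_next_of_mem_stage (A.le_stage n N hx) (h.le hx)

theorem next (h : A.IsStage n N) : A.IsStage n (A.next n N) where
  low_le x hx hn := h.le_next (h.low_le x hx hn)
  le := inf_le_left
  d_mem x hx := by
    refine A.d_mem_adjoin (A.homogeneous_stage inf_le_left) ?_ hx
    rintro a (⟨i, hi, ha⟩ | ha)
    · exact A.stage_mono h.le_next (h.d_mem a (A.low_subset_stage n N hi ha))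
    · exact A.stage_mono h.le_next ha.2

/-- If `A` is semifree on `V`, a stage is generated by the elements of `V` it contains. -/
theorem stage_le {V : ℕ → Submodule k A.carrier} (hV : IsSemifree A V) (h : A.IsStage n N) :
    A.stage n N ≤ Algebra.adjoin k ({v | ∃ i < n, v ∈ V i} ∪ {v | v ∈ V n ∧ v ∈ N}) := by
  refine Algebra.adjoin_le ?_
  have hlow : Algebra.adjoin k (A.low n) ≤
      Algebra.adjoin k ({v | ∃ i < n, v ∈ V i} ∪ {v | v ∈ V n ∧ v ∈ N}) :=
    hV.adjoin_low n ▸ Algebra.adjoin_mono Set.subset_union_left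
  rintro a (ha | ha)
  · exact hlow (Algebra.subset_adjoin ha)
  · obtain ⟨v, hv, z, hz, rfl⟩ := Submodule.mem_sup.1 (hV.grading_le n (h.le ha))
    have hz' : z ∈ Algebra.adjoin k (A.low n) := hV.adjoin_low n ▸ hz
    have hzn : z ∈ A.grading n := by
      simpa using sub_mem (h.le ha) (hV.2.1 n hv)
    have hvN : v ∈ N := by
      simpa using sub_mem (show v + z ∈ N from ha) (h.low_le z hz' hzn)
    exact add_mem (Algebra.subset_adjoin (Or.inr ⟨hv, hvN⟩)) (hlow hz')

end DGCA.IsStage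

/-- The homomorphism `f` restricts to a bijection between the subalgebras `S` and `T`. -/
structure DGCAHom.BijOn (f : DGCAHom A B) (S : Subalgebra k A.carrier)
    (T : Subalgebra k B.carrier) : Prop where
  mapsTo : ∀ a ∈ S, f.hom a ∈ T
  inj : ∀ a ∈ S, f.hom a = 0 → a = 0
  surj : ∀ b ∈ T, ∃ a ∈ S, f.hom a = b

section Step

variable {n : ℕ} {N : Submodule k A.carrier} {M : Submodule k B.carrier} {f : DGCAHom A B}

theorem DGCAHom.BijOn.surj_grading (h : f.BijOn (A.stage n N) (B.stage n M))
    (hN : A.IsStage n N) {i : ℕ} {b : B.carrier} (hb : b ∈ B.stage n M)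
    (hi : b ∈ B.grading i) : ∃ a ∈ A.stage n N, a ∈ A.grading i ∧ f.hom a = b := by
  obtain ⟨a, ha, rfl⟩ := h.surj b hb
  exact ⟨A.proj i a, A.proj_mem_adjoin (A.homogeneous_stage hN.le) ha i, A.proj_mem i a,
    by rw [f.hom_proj, B.proj_same hi]⟩

theorem DGCAHom.map_next (h : f.BijOn (A.stage n N) (B.stage n M)) {a : A.carrier}
    (ha : a ∈ A.next n N) : f.hom a ∈ B.next n M :=
  ⟨f.map_grading n a ha.1, by
    simpa [← f.map_d] using h.mapsTo _ ha.2⟩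

/-- Injectivity half of the five lemma, in degree `n`. -/
theorem DGCAHom.next_inj (hf : f.IsQuasiIso) (h : f.BijOn (A.stage n N) (B.stage n M))
    (hN : A.IsStage n N) {a : A.carrier} (ha : a ∈ A.next n N) (h0 : f.hom a = 0) : a = 0 := by
  have hda : A.d a = 0 := h.inj _ ha.2 (by rw [f.map_d, h0, map_zero])
  obtain ⟨c, rfl, rfl | ⟨i, hi, hc⟩⟩ := A.exists_of_mem_coboundaries
    ((hf n).1 a ⟨ha.1, hda⟩ (by rw [h0]; exact zero_mem _))
  · exact map_zero _
  -- `f c` is a cocycle, hence comes from a cocycle `z` up to the differential of some `f e'`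
  obtain ⟨z, hz, hcz⟩ := (hf i).2 (f.hom c)
    ⟨f.map_grading i c hc, by
      change B.d (f.hom c) = 0
      rw [← f.map_d, h0]⟩
  have hdz : A.d z = 0 := hz.2
  obtain ⟨e, he, he'⟩ := B.exists_of_mem_coboundaries hcz
  have heM : e ∈ B.stage n M := by
    rcases he' with rfl | ⟨j, hj, hej⟩
    · exact zero_mem _
    · exact B.low_subset_stage n M (by omega) hej
  obtain ⟨e', he'N, rfl⟩ := h.surj e heM
  have hmem : c - z - A.d e' ∈ A.stage n N :=
    sub_mem (sub_mem (A.low_subset_stage n N (by omega) hc)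
      (A.low_subset_stage n N (by omega) hz.1)) (hN.d_mem _ he'N)
  have hzero := h.inj _ hmem (by rw [map_sub, map_sub, f.map_d, he, sub_self])
  have := congrArg A.d hzero
  simpa [hdz, A.d_squared] using this

/-- Surjectivity half of the five lemma, in degree `n`. -/
theorem DGCAHom.next_surj (hf : f.IsQuasiIso) (h : f.BijOn (A.stage n N) (B.stage n M))
    (hN : A.IsStage n N) {b : B.carrier} (hb : b ∈ B.next n M) :
    ∃ a ∈ A.next n N, f.hom a = b := by
  obtain ⟨a, haN, han, hab⟩ := h.surj_grading hN hb.2 (B.d_mem hb.1)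
  have hda : A.d a = 0 := h.inj _ (hN.d_mem a haN) (by rw [f.map_d, hab, B.d_squared])
  obtain ⟨c, rfl, hc⟩ := A.exists_of_mem_coboundaries
    ((hf (n + 1)).1 a ⟨han, hda⟩ (by rw [hab]; exact ⟨B.d_mem hb.1, b, rfl⟩))
  have hcn : c ∈ A.grading n := by
    rcases hc with rfl | ⟨i, hi, hc⟩
    · exact zero_mem _
    · obtain rfl : i = n := by omega
      exact hc
  obtain ⟨z, hz, hbz⟩ := (hf n).2 (b - f.hom c)
    ⟨sub_mem hb.1 (f.map_grading n c hcn), by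
      change B.d (b - f.hom c) = 0
      rw [map_sub, ← f.map_d, hab, sub_self]⟩
  have hdz : A.d z = 0 := hz.2
  obtain ⟨e, he, he'⟩ := B.exists_of_mem_coboundaries hbz
  obtain ⟨e', he'n, rfl⟩ : ∃ e', A.d e' ∈ A.grading n ∧ f.hom e' = e := by
    rcases he' with rfl | ⟨j, hj, hej⟩
    · exact ⟨0, by rw [map_zero]; exact zero_mem _, map_zero _⟩
    · obtain ⟨e', -, he', rfl⟩ :=
        h.surj_grading hN (B.low_subset_stage n M (by omega) hej) hej
      exact ⟨e', hj ▸ A.d_mem he', rfl⟩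
  refine ⟨c + z + A.d e', ⟨add_mem (add_mem hcn hz.1) he'n, ?_⟩, ?_⟩
  · simpa [hdz, A.d_squared] using haN
  · rw [map_add, map_add, f.map_d, he]; abel

/-- A linear section of `f`, defined on `U` with values in `N`, over all elements of `U` that
`f` hits from `N`. -/
theorem DGCAHom.exists_section (f : DGCAHom A B) (N : Submodule k A.carrier)
    (U : Submodule k B.carrier) : ∃ s : U →ₗ[k] A.carrier, (∀ u, s u ∈ N) ∧
      ∀ u : U, (∃ a ∈ N, f.hom a = u) → f.hom (s u) = u := by
  set L : N →ₗ[k] B.carrier := f.hom.toLinearMap ∘ₗ N.subtype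
  obtain ⟨r₀, hr₀⟩ := L.rangeRestrict.exists_rightInverse_of_surjective L.range_rangeRestrict
  obtain ⟨r, hr⟩ := LinearMap.exists_extend r₀
  refine ⟨N.subtype ∘ₗ r ∘ₗ U.subtype, fun u => (r u).2, ?_⟩
  rintro u ⟨a, ha, hau⟩
  have hu : (u : B.carrier) ∈ LinearMap.range L := ⟨⟨a, ha⟩, hau⟩
  have h1 : r u = r₀ ⟨u, hu⟩ := DFunLike.congr_fun hr ⟨(u : B.carrier), hu⟩
  have h2 : L.rangeRestrict (r₀ ⟨u, hu⟩) = ⟨u, hu⟩ := DFunLike.congr_fun hr₀ ⟨(u : B.carrier), hu⟩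
  change f.hom (r u : A.carrier) = u
  rw [h1]
  exact congrArg Subtype.val h2

/-- If `B` is semifree, a bijection between stages extends to the next stages. Freeness of `B`
provides an algebra map `g : B → A` that is a section of `f` on the next stage of `B`, and `g`
turns out to be a left inverse of `f` on the next stage of `A`. -/
theorem DGCAHom.BijOn.next {W : ℕ → Submodule k B.carrier} (hW : IsSemifree B W)
    (hf : f.IsQuasiIso) (hN : A.IsStage n N) (hM : B.IsStage n M)
    (h : f.BijOn (A.stage n N) (B.stage n M)) :
    f.BijOn (A.stage n (A.next n N)) (B.stage n (B.next n M)) := by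
  have hs : ∀ i, ∃ s : W i →ₗ[k] A.carrier, (∀ w, s w ∈ A.grading i) ∧
      (i < n → ∀ w : W i, f.hom (s w) = w) ∧
      (i = n → (∀ w, s w ∈ A.next n N) ∧ ∀ w : W i, (w : B.carrier) ∈ B.next n M →
        f.hom (s w) = w) := by
    intro i
    by_cases hi : i = n
    · obtain ⟨s, hs, hs'⟩ := f.exists_section (A.next n N) (W i)
      exact ⟨s, fun w => hi ▸ (hs w).1, fun hlt => absurd hi hlt.ne,
        fun _ => ⟨hs, fun w hw => hs' w (DGCAHom.next_surj hf h hN hw)⟩⟩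
    · obtain ⟨s, hs, hs'⟩ := f.exists_section (A.grading i) (W i)
      refine ⟨s, hs, fun hlt w => hs' w ?_, fun h => absurd h hi⟩
      have hwi := hW.2.1 i w.2
      obtain ⟨a, -, ha, hab⟩ := h.surj_grading hN (B.low_subset_stage n M hlt hwi) hwi
      exact ⟨a, ha, hab⟩
  choose s hsi hlt heq using hs
  obtain ⟨g, hg, -⟩ := hW.2.2 A.toGCA s hsi
  have hglt : ∀ i < n, ∀ w ∈ W i, f.hom (g w) = w ∧ g w ∈ A.grading i := by
    intro i hi w hw
    rw [hg i ⟨w, hw⟩]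
    exact ⟨hlt i hi ⟨w, hw⟩, hsi i ⟨w, hw⟩⟩
  have hgeq : ∀ w ∈ W n, w ∈ B.next n M → f.hom (g w) = w ∧ g w ∈ A.next n N := by
    intro w hw hwn
    rw [hg n ⟨w, hw⟩]
    exact ⟨(heq n rfl).2 ⟨w, hw⟩ hwn, (heq n rfl).1 ⟨w, hw⟩⟩
  -- `g` is a section of `f` on the next stage
  have hfg : ∀ b ∈ B.stage n (B.next n M), f.hom (g b) = b := by
    intro b hb
    refine (hM.next.stage_le hW).trans (Algebra.adjoin_le ?_ :
      _ ≤ AlgHom.equalizer (f.hom.comp g) (AlgHom.id k B.carrier)) hb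
    rintro w (⟨i, hi, hw⟩ | ⟨hw, hwn⟩)
    · exact (hglt i hi w hw).1
    · exact (hgeq w hw hwn).1
  have hgM : ∀ b ∈ B.stage n M, g b ∈ A.stage n N := by
    intro b hb
    refine (hM.stage_le hW).trans (Algebra.adjoin_le ?_ : _ ≤ (A.stage n N).comap g) hb
    rintro w (⟨i, hi, hw⟩ | ⟨hw, hwM⟩)
    · exact A.low_subset_stage n N hi (hglt i hi w hw).2
    · -- `w` has a unique preimage in `A.next n N`, and this preimage lies in the current stage
      have hwn := hM.le_next hwM
      obtain ⟨a, ha, han, hab⟩ := h.surj_grading hN (B.le_stage n M hwM) hwn.1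
      obtain ⟨h1, h2⟩ := hgeq w hw hwn
      have : g w - a = 0 := DGCAHom.next_inj hf h hN
        (sub_mem h2 (hN.mem_next_of_mem_stage ha han)) (by rw [map_sub, h1, hab, sub_self])
      rw [SetLike.mem_coe, Subalgebra.mem_comap, sub_eq_zero.1 this]
      exact ha
  have hgf : ∀ a ∈ A.stage n N, g (f.hom a) = a := by
    intro a ha
    have hfa := h.mapsTo a ha
    refine sub_eq_zero.1 (h.inj _ (sub_mem (hgM _ hfa) ha) ?_)
    rw [map_sub, hfg _ (B.stage_mono hM.le_next hfa), sub_self]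
  have hgf' : ∀ a ∈ A.stage n (A.next n N), g (f.hom a) = a := by
    intro a ha
    refine (Algebra.adjoin_le ?_ :
      A.stage n (A.next n N) ≤ AlgHom.equalizer (g.comp f.hom) (AlgHom.id k A.carrier)) ha
    rintro a (⟨i, hi, ha⟩ | ha)
    · exact hgf a (A.low_subset_stage n N hi ha)
    · have hfa := DGCAHom.map_next h ha
      obtain ⟨w, hw, z, hz, hwz⟩ := Submodule.mem_sup.1 (hW.grading_le n hfa.1)
      have hz' : z ∈ Algebra.adjoin k (B.low n) := hW.adjoin_low n ▸ hz
      have hzn : z ∈ B.grading n := by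
        rw [← add_sub_cancel_left w z, hwz]
        exact sub_mem hfa.1 (hW.2.1 n hw)
      have hzM := hM.low_le z hz' hzn
      have hwn : w ∈ B.next n M := by
        rw [← add_sub_cancel_right w z, hwz]
        exact sub_mem hfa (hM.le_next hzM)
      obtain ⟨a', ha', han', rfl⟩ := h.surj_grading hN (B.le_stage n M hzM) hzn
      have hmem : g (f.hom a) ∈ A.next n N := by
        rw [← hwz, map_add, hgf a' ha']
        exact add_mem (hgeq w hw hwn).2 (hN.mem_next_of_mem_stage ha' han')
      change g (f.hom a) = a
      refine sub_eq_zero.1 (DGCAHom.next_inj hf h hN (sub_mem hmem ha) ?_)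
      rw [map_sub, hfg _ (B.le_stage n _ hfa), sub_self]
  refine ⟨fun a ha => ?_, fun a ha h0 => ?_, fun b hb => ?_⟩
  · refine (Algebra.adjoin_le ?_ :
      A.stage n (A.next n N) ≤ (B.stage n (B.next n M)).comap f.hom) ha
    rintro a (⟨i, hi, ha⟩ | ha)
    · exact B.low_subset_stage n _ hi (f.map_grading i a ha)
    · exact B.le_stage n _ (DGCAHom.map_next h ha)
  · rw [← hgf' a ha, h0, map_zero]
  · refine ⟨g b, ?_, hfg b hb⟩
    refine (hM.next.stage_le hW).trans (Algebra.adjoin_le ?_ :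
      _ ≤ (A.stage n (A.next n N)).comap g) hb
    rintro w (⟨i, hi, hw⟩ | ⟨hw, hwn⟩)
    · exact A.low_subset_stage n _ hi (hglt i hi w hw).2
    · exact A.le_stage n _ (hgeq w hw hwn).2

end Step

end Stage

/-! ### Minimal Sullivan algebras are exhausted by the stages -/

section Tower

variable {k : Type} [Field k] {A B : DGCA k}

/-- The increasing sequence of subspaces of `A.grading n` that starts with the polynomials of
degree `n` in elements of lower degree and is continued by `DGCA.next`. -/
def DGCA.tower (A : DGCA k) (n : ℕ) : ℕ → Submodule k A.carrier
  | 0 => Subalgebra.toSubmodule (Algebra.adjoin k (A.low n)) ⊓ A.grading n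
  | m + 1 => A.next n (A.tower n m)

theorem DGCA.stage_tower_zero (n : ℕ) :
    A.stage n (A.tower n 0) = Algebra.adjoin k (A.low n) := by
  refine le_antisymm (Algebra.adjoin_le ?_) (Algebra.adjoin_mono Set.subset_union_left)
  rintro a (ha | ha)
  · exact Algebra.subset_adjoin ha
  · exact ha.1

theorem DGCA.low_mono {m n : ℕ} (h : m ≤ n) : A.low m ⊆ A.low n :=
  fun _ ⟨i, hi, ha⟩ => ⟨i, by omega, ha⟩

theorem DGCA.stage_le_adjoin_low {n : ℕ} {N : Submodule k A.carrier} (h : N ≤ A.grading n) :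
    A.stage n N ≤ Algebra.adjoin k (A.low (n + 1)) :=
  Algebra.adjoin_mono (Set.union_subset (A.low_mono n.le_succ) fun _ ha => ⟨n, n.lt_succ_self, h ha⟩)

variable {V : ℕ → Submodule k A.carrier}

theorem IsMinimalSullivan.d_mem_low (h : IsMinimalSullivan A V) {n : ℕ} {v : A.carrier}
    (hv : v ∈ V n) : A.d v ∈ Algebra.adjoin k (A.low (n + 1)) :=
  A.mem_adjoin_low (h.2.2 n v hv) (A.d_mem (h.1.2.1 n hv))

/-- The subalgebras attached to the tower are stable under `d`; for the first one this is
minimality. -/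
theorem IsMinimalSullivan.isStage_tower (h : IsMinimalSullivan A V) (n m : ℕ) :
    A.IsStage n (A.tower n m) := by
  induction m with
  | succ m ih => exact ih.next
  | zero =>
    refine ⟨fun x hx hn => ⟨hx, hn⟩, inf_le_right, fun x hx => ?_⟩
    rw [A.stage_tower_zero, h.1.adjoin_low n] at hx ⊢
    refine A.d_mem_adjoin (h.1.homogeneous_low n) ?_ hx
    rintro v ⟨i, hi, hv⟩
    rw [← h.1.adjoin_low n]
    exact Algebra.adjoin_mono (A.low_mono hi) (h.d_mem_low hv)

theorem IsMinimalSullivan.tower_mono (h : IsMinimalSullivan A V) (n : ℕ) :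
    Monotone (A.tower n) :=
  monotone_nat_of_le_succ fun m => (h.isStage_tower n m).le_next

/-- Minimality and nilpotency ensure that the tower exhausts the elements of degree `n`. -/
theorem IsMinimalSullivan.exists_mem_tower (h : IsMinimalSullivan A V) {n : ℕ} {a : A.carrier}
    (ha : a ∈ A.grading n) : ∃ m, a ∈ A.tower n m := by
  obtain ⟨F, hF0, hFmono, hFV, hFsup, hFd⟩ := h.2.1
  -- the endomorphism of the graded algebra `A` that kills the generators of degree above `n`
  classical
  obtain ⟨θ, hθ, -⟩ := h.1.2.2 A.toGCA (fun i => if i ≤ n then (V i).subtype else 0) (by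
    intro i v
    split_ifs
    · exact h.1.2.1 i v.2
    · exact zero_mem _)
  have hθ1 : ∀ i ≤ n, ∀ v ∈ V i, θ v = v := by
    intro i hi v hv
    simpa [hi] using hθ i ⟨v, hv⟩
  have hθ0 : ∀ i, n < i → ∀ v ∈ V i, θ v = 0 := by
    intro i hi v hv
    simpa [not_le.2 hi] using hθ i ⟨v, hv⟩
  have hθlow : ∀ x ∈ Algebra.adjoin k (A.low (n + 1)), θ x = x := by
    intro x hx
    rw [h.1.adjoin_low] at hx
    refine (Algebra.adjoin_le ?_ : _ ≤ AlgHom.equalizer θ (AlgHom.id k A.carrier)) hx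
    rintro v ⟨i, hi, hv⟩
    exact hθ1 i (by omega) v hv
  have hF : ∀ m, F m n ≤ A.tower n m := by
    intro m
    induction m with
    | zero => rw [hF0]; exact bot_le
    | succ m ih =>
      intro v hv
      have hvV : v ∈ V n := hFV _ _ hv
      refine ⟨h.1.2.1 n hvV, ?_⟩
      have hdv := hθlow _ (h.d_mem_low hvV)
      -- `d v = θ (d v)` only involves generators of degree at most `n`
      have hmem : A.d v ∈ (A.stage n (A.tower n m)).comap θ := by
        refine (Algebra.adjoin_le ?_ :
          _ ≤ (A.stage n (A.tower n m)).comap θ) (hFd m n v hv)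
        intro w hw
        obtain ⟨i, hi⟩ := Set.mem_iUnion.1 hw
        have hwV : w ∈ V i := hFV _ _ hi
        rw [SetLike.mem_coe, Subalgebra.mem_comap]
        rcases lt_trichotomy i n with hin | rfl | hin
        · rw [hθ1 i hin.le w hwV]
          exact A.low_subset_stage n _ hin (h.1.2.1 i hwV)
        · rw [hθ1 i le_rfl w hwV]
          exact A.le_stage i _ (ih hi)
        · rw [hθ0 i hin w hwV]
          exact zero_mem _
      rw [Subalgebra.mem_comap, hdv] at hmem
      exact hmem
  obtain ⟨v, hv, z, hz, rfl⟩ := Submodule.mem_sup.1 (h.1.grading_le n ha)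
  have hz' : z ∈ Algebra.adjoin k (A.low n) := h.1.adjoin_low n ▸ hz
  have hzn : z ∈ A.grading n := by
    rw [← add_sub_cancel_left v z]
    exact sub_mem ha (h.1.2.1 n hv)
  rw [← hFsup n] at hv
  obtain ⟨m, hm⟩ := (Submodule.mem_iSup_of_directed _
    (monotone_nat_of_le_succ fun m => hFmono m n).directed_le).1 hv
  exact ⟨m, add_mem (hF m hm) ((h.isStage_tower n m).low_le z hz' hzn)⟩

theorem IsMinimalSullivan.exists_mem_stage (h : IsMinimalSullivan A V) {n : ℕ} {a : A.carrier}
    (ha : a ∈ Algebra.adjoin k (A.low (n + 1))) : ∃ m, a ∈ A.stage n (A.tower n m) := by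
  have hdir : Directed (· ≤ ·) fun m => A.stage n (A.tower n m) :=
    Monotone.directed_le fun _ _ hm => A.stage_mono (h.tower_mono n hm)
  have hle : Algebra.adjoin k (A.low (n + 1)) ≤ ⨆ m, A.stage n (A.tower n m) := by
    refine Algebra.adjoin_le ?_
    rintro x ⟨i, hi, hx⟩
    rw [SetLike.mem_coe, ← SetLike.mem_coe, Subalgebra.coe_iSup_of_directed hdir, Set.mem_iUnion]
    rcases Nat.lt_succ_iff_lt_or_eq.1 hi with hi | rfl
    · exact ⟨0, A.low_subset_stage n _ hi hx⟩
    · obtain ⟨m, hm⟩ := h.exists_mem_tower hx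
      exact ⟨m, A.le_stage i _ hm⟩
  have := hle ha
  rwa [← SetLike.mem_coe, Subalgebra.coe_iSup_of_directed hdir, Set.mem_iUnion] at this

theorem DGCA.exists_mem_low (a : A.carrier) : ∃ n, a ∈ Algebra.adjoin k (A.low n) := by
  refine A.homogeneous_induction (p := fun a => ∃ n, a ∈ Algebra.adjoin k (A.low n)) a ?_ ?_
  · intro n a ha
    exact ⟨n + 1, Algebra.subset_adjoin ⟨n, n.lt_succ_self, ha⟩⟩
  · rintro a b ⟨m, hm⟩ ⟨n, hn⟩
    exact ⟨max m n, add_mem (Algebra.adjoin_mono (A.low_mono (le_max_left m n)) hm)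
      (Algebra.adjoin_mono (A.low_mono (le_max_right m n)) hn)⟩

/-- A quasi-isomorphism of minimal Sullivan algebras is bijective on the subalgebras generated
by the elements of degree less than `n`. -/
theorem DGCAHom.IsQuasiIso.bijOn_low {W : ℕ → Submodule k B.carrier} {f : DGCAHom A B}
    (hf : f.IsQuasiIso) (hA : IsMinimalSullivan A V) (hB : IsMinimalSullivan B W) (n : ℕ) :
    f.BijOn (Algebra.adjoin k (A.low n)) (Algebra.adjoin k (B.low n)) := by
  induction n with
  | zero =>
    have hlow : ∀ C : DGCA k, Algebra.adjoin k (C.low 0) = ⊥ := by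
      intro C
      have : C.low 0 = ∅ := by ext; simp [GCA.low]
      rw [this, Algebra.adjoin_empty]
    simp only [hlow]
    refine ⟨?_, ?_, ?_⟩
    · rintro a ⟨c, rfl⟩
      exact ⟨c, (f.hom.commutes c).symm⟩
    · rintro a ⟨c, rfl⟩ h0
      have hc : algebraMap k A.carrier c = c • 1 := Algebra.algebraMap_eq_smul_one c
      change f.hom (algebraMap k A.carrier c) = 0 at h0
      change algebraMap k A.carrier c = 0
      rw [hc] at h0 ⊢
      -- there are no nonzero coboundaries of degree `0`
      obtain ⟨b, hb, rfl | ⟨i, hi, -⟩⟩ := A.exists_of_mem_coboundaries ((hf 0).1 (c • 1)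
        ⟨(A.grading 0).smul_mem c A.one_mem, by
          change A.d (c • 1) = 0
          rw [map_smul, A.d_one, smul_zero]⟩ (by rw [h0]; exact zero_mem _))
      · rw [← hb, map_zero]
      · omega
    · rintro b ⟨c, rfl⟩
      exact ⟨algebraMap k A.carrier c, ⟨c, rfl⟩, f.hom.commutes c⟩
  | succ n ih =>
    have hstage : ∀ m, f.BijOn (A.stage n (A.tower n m)) (B.stage n (B.tower n m)) := by
      intro m
      induction m with
      | zero => rwa [A.stage_tower_zero, B.stage_tower_zero]
      | succ m ihm => exact ihm.next hB.1 hf (hA.isStage_tower n m) (hB.isStage_tower n m)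
    refine ⟨fun a ha => ?_, fun a ha h0 => ?_, fun b hb => ?_⟩
    · obtain ⟨m, hm⟩ := hA.exists_mem_stage ha
      exact B.stage_le_adjoin_low (hB.isStage_tower n m).le ((hstage m).mapsTo a hm)
    · obtain ⟨m, hm⟩ := hA.exists_mem_stage ha
      exact (hstage m).inj a hm h0
    · obtain ⟨m, hm⟩ := hB.exists_mem_stage hb
      obtain ⟨a, ha, rfl⟩ := (hstage m).surj b hm
      exact ⟨a, A.stage_le_adjoin_low (hA.isStage_tower n m).le ha, rfl⟩

end Tower

/-- Every quasi-isomorphism between minimal Sullivan algebras over a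
field of characteristic 0 is an isomorphism of DGCAs. -/
theorem statement_0 {k : Type} [Field k] [CharZero k]
    (A B : DGCA k)
    (V : ℕ → Submodule k A.carrier) (W : ℕ → Submodule k B.carrier)
    (hA : IsMinimalSullivan A V) (hB : IsMinimalSullivan B W)
    (f : DGCAHom A B) (hf : f.IsQuasiIso) :
    f.IsIso := by
  constructor
  · rw [injective_iff_map_eq_zero]
    intro a h0
    obtain ⟨n, hn⟩ := A.exists_mem_low a
    exact (hf.bijOn_low hA hB n).inj a hn h0
  · intro b
    obtain ⟨n, hn⟩ := B.exists_mem_low b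
    obtain ⟨a, -, rfl⟩ := (hf.bijOn_low hA hB n).surj b hn
    exact ⟨a, rfl⟩
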